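/- Let k ≥ 0 be an integer and let G be a simple graph of order n ≥ 2k+5. If e(G) ≥ C(n−k−1, 2) + C(k+2, 2), then G is weakly pancyclic with girth 3, i.e. G contains a triangle and a cycle of every length ℓ with 3 ≤ ℓ ≤ c(G), where c(G) is the circumference of G. -/

import Mathlib

open SimpleGraph

/-- `G` contains a cycle of length `l`. -/
def HasCycleLen {V : Type} (G : SimpleGraph V) (l : ℕ) : Prop :=
  ∃ (v : V) (c : G.Walk v v), c.IsCycle ∧ c.length = l

/-- The circumference of `G`: the length of a longest cycle. -/
noncomputable def circumference {V : Type} (G : SimpleGraph V) : ℕ :=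
  sSup {l | HasCycleLen G l}

/-- `G` is weakly pancyclic with girth 3: it contains a cycle of every length `l`
with `3 ≤ l ≤ c(G)`. -/
def WeaklyPancyclic3 {V : Type} (G : SimpleGraph V) : Prop :=
  HasCycleLen G 3 ∧ ∀ l : ℕ, 3 ≤ l → l ≤ circumference G → HasCycleLen G l

/-- The number of edges of `G`. -/
noncomputable def edgeCount {V : Type} (G : SimpleGraph V) : ℕ :=
  Nat.card G.edgeSet

/-- The degree of `v` in `G`. -/
noncomputable def degCount {V : Type} (G : SimpleGraph V) (v : V) : ℕ :=
  Nat.card (G.neighborSet v)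

/-- The spectral radius of `G`: the largest eigenvalue of the adjacency matrix. -/
noncomputable def specRad {V : Type} [Finite V] (G : SimpleGraph V) : ℝ :=
  letI := Fintype.ofFinite V
  letI := Classical.decEq V
  letI := Classical.decRel G.Adj
  sSup (spectrum ℝ (G.adjMatrix ℝ))

/-- The signless Laplacian spectral radius of `G`: the largest eigenvalue of `D(G) + A(G)`. -/
noncomputable def qSpecRad {V : Type} [Finite V] (G : SimpleGraph V) : ℝ :=
  letI := Fintype.ofFinite V
  letI := Classical.decEq V
  letI := Classical.decRel G.Adj
  sSup (spectrum ℝ (Matrix.diagonal (fun v => (degCount G v : ℝ)) + G.adjMatrix ℝ))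

/-- `L_{n,k} = K_1 ∨ (K_{n-k-1} + K_k)`: vertex `0` is the common vertex of a clique on
the `n - k` vertices `{0, …, n-k-1}` and a clique on the `k+1` vertices `{0} ∪ {n-k, …, n-1}`. -/
def Lgraph (n k : ℕ) : SimpleGraph (Fin n) :=
  SimpleGraph.fromRel (fun u v =>
    u.val = 0 ∨ v.val = 0 ∨ (u.val < n - k ∧ v.val < n - k) ∨
      (n - k ≤ u.val ∧ n - k ≤ v.val))

/-- `Γ_{n,t} = K_2 ∨ (K_{n-2-t} + t·K_1)`: vertices `0,1` are joined to everything,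
vertices `2, …, n-t-1` form a clique, and vertices `n-t, …, n-1` are independent. -/
def GammaGraph (n t : ℕ) : SimpleGraph (Fin n) :=
  SimpleGraph.fromRel (fun u v =>
    u.val < 2 ∨ v.val < 2 ∨ (u.val < n - t ∧ v.val < n - t))

/-- `F` is a member of the family `F_{n,k}`: there is a clique `K` on `n - k` vertices
such that each connected component of `F - K` is a clique all of whose vertices are
adjacent to one single common vertex of `K` and to no other vertex of `K`. -/
def MemF (n k : ℕ) (F : SimpleGraph (Fin n)) : Prop :=
  ∃ K : Finset (Fin n), K.card = n - k ∧ F.IsClique (↑K : Set (Fin n)) ∧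
    (∀ u v : ({x : Fin n | x ∉ K} : Set (Fin n)),
      (F.induce {x : Fin n | x ∉ K}).Reachable u v → (u = v ∨ F.Adj u.1 v.1)) ∧
    (∀ u : ({x : Fin n | x ∉ K} : Set (Fin n)), ∃! w : Fin n, w ∈ K ∧ F.Adj u.1 w) ∧
    (∀ u v : ({x : Fin n | x ∉ K} : Set (Fin n)),
      (F.induce {x : Fin n | x ∉ K}).Reachable u v →
        ∀ w ∈ K, F.Adj u.1 w → F.Adj v.1 w)

/-- `G` is a subgraph of `H` (up to relabelling): there is an injective graph
homomorphism from `G` to `H`. -/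
def IsSubgraphOf {n : ℕ} (G H : SimpleGraph (Fin n)) : Prop :=
  ∃ f : G →g H, Function.Injective f

/-! The number `e` of edges satisfies `4 e > n²`, so Mantel's theorem yields a triangle. For the
other lengths take a longest cycle `C` and delete vertices off `C` of degree less than half the
current order: this preserves `4 e > n²`, and `C` stays a longest cycle.

When no such vertex is left, `C` is spanning: otherwise take a longest path `P` in `G - C`. Both
ends of `P` have neighbours on `C`, and since replacing an arc of `C` by `P` never gives a longer
cycle, every gap on `C` from a neighbour of one end to a neighbour of the other exceeds the length
of `P` by at least two; counting contradicts the degrees of the ends.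

If `C` is spanning, two consecutive vertices of `C` have degree sum exceeding `|C|`. Following
Bondy, pair the possible chords at one with those at the other so that each pair closes up a cycle
of length `l`; by the pigeonhole principle both chords of some pair are present. -/

section

open scoped Finset

/-- `G` has a path of length `m` from `u` to `v` all of whose vertices lie in `s`. Recording `s`
rather than the walk lets two paths be combined into a cycle from `Disjoint s t` alone. -/
def HasPathIn {V : Type} (G : SimpleGraph V) (s : Set V) (u v : V) (m : ℕ) : Prop :=
  ∃ p : G.Walk u v, p.IsPath ∧ p.length = m ∧ ∀ x ∈ p.support, x ∈ s

/-- `F` lists the vertices of a cycle of length `c` of `G` in cyclic order. The index type `ZMod c`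
makes all rotations of the cycle available. Below `c = 3` this is not a cycle: `c = 2` is an edge
and `c = 0` a two-way infinite path. -/
structure IsCyclicSeq {V : Type} (G : SimpleGraph V) {c : ℕ} (F : ZMod c → V) : Prop where
  injective : Function.Injective F
  adj_add_one : ∀ z, G.Adj (F z) (F (z + 1))

variable {V : Type} {G : SimpleGraph V}

section Paths

variable {s t : Set V} {u v x y : V} {m k : ℕ}

lemma HasPathIn.nil (h : u ∈ s) : HasPathIn G s u u 0 :=
  ⟨Walk.nil, Walk.IsPath.nil, rfl, by simpa using h⟩

lemma HasPathIn.symm (h : HasPathIn G s u v m) : HasPathIn G s v u m := by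
  obtain ⟨p, hp, hlen, hs⟩ := h
  exact ⟨p.reverse, hp.reverse, by rw [Walk.length_reverse, hlen], by simpa using hs⟩

lemma HasPathIn.append (hp : HasPathIn G s u v m) (hq : HasPathIn G t x y k)
    (hst : Disjoint s t) (hvx : G.Adj v x) : HasPathIn G (s ∪ t) u y (m + k + 1) := by
  obtain ⟨p, hp, rfl, hps⟩ := hp
  obtain ⟨q, hq, rfl, hqt⟩ := hq
  have hsupp : (p.append (q.cons hvx)).support = p.support ++ q.support := by
    simp [Walk.support_append]
  refine ⟨p.append (q.cons hvx), ?_, by simp [add_assoc], fun z hz => ?_⟩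
  · rw [Walk.isPath_def, hsupp, List.nodup_append']
    exact ⟨hp.support_nodup, hq.support_nodup,
      fun z hzp hzq => hst.notMem_of_mem_left (hps z hzp) (hqt z hzq)⟩
  · rw [hsupp, List.mem_append] at hz
    exact hz.imp (hps z) (hqt z)

lemma HasPathIn.hasCycleLen (h : HasPathIn G s u v m) (hm : 2 ≤ m) (hvu : G.Adj v u) :
    HasCycleLen G (m + 1) := by
  obtain ⟨p, hp, rfl, -⟩ := h
  refine ⟨v, p.cons hvu, (Walk.cons_isCycle_iff p hvu).2 ⟨hp, fun hmem => ?_⟩, by simp⟩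
  have := hp.length_eq_one_of_mem_edges (Sym2.eq_swap ▸ hmem)
  omega

lemma HasPathIn.hasCycleLen_of_disjoint (hp : HasPathIn G s u v m) (hq : HasPathIn G t x y k)
    (hst : Disjoint s t) (hvx : G.Adj v x) (hyu : G.Adj y u) (hmk : 1 ≤ m + k) :
    HasCycleLen G (m + k + 2) :=
  (hp.append hq hst hvx).hasCycleLen (by omega) hyu

lemma hasPathIn_image_Icc {f : ℕ → V} {a b : ℕ} (hab : a ≤ b)
    (hinj : Set.InjOn f (Set.Icc a b)) (hadj : ∀ i, G.Adj (f i) (f (i + 1))) :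
    HasPathIn G (f '' Set.Icc a b) (f a) (f b) (b - a) := by
  induction b, hab using Nat.le_induction with
  | base => simpa using HasPathIn.nil (Set.mem_singleton (f a))
  | succ b hab ih =>
    have hIcc : Set.Icc a (b + 1) = Set.Icc a b ∪ {b + 1} := by
      ext i; simp only [Set.mem_Icc, Set.mem_union, Set.mem_singleton_iff]; omega
    have hdisj : Disjoint (f '' Set.Icc a b) {f (b + 1)} := by
      rw [Set.disjoint_singleton_right]
      rintro ⟨i, hi, hfi⟩
      have := hinj ⟨hi.1, hi.2.trans b.le_succ⟩ ⟨by omega, le_rfl⟩ hfi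
      have := hi.2
      omega
    have hstep := (ih (hinj.mono (Set.Icc_subset_Icc_right b.le_succ))).append
      (HasPathIn.nil (Set.mem_singleton _)) hdisj (hadj b)
    rwa [hIcc, Set.image_union, Set.image_singleton, show b + 1 - a = b - a + 0 + 1 by omega]

lemma exists_hasCycleLen_gt_degree [Fintype (G.neighborSet u)] {p : G.Walk u v} (hp : p.IsPath)
    (hsupp : ∀ w, G.Adj u w → w ∈ p.support) (hdeg : 2 ≤ G.degree u) :
    ∃ l, G.degree u < l ∧ HasCycleLen G l := by
  classical
  obtain ⟨i, hile, hi, hadj⟩ : ∃ i, i ≤ p.length ∧ G.degree u ≤ i ∧ G.Adj u (p.getVert i) := by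
    by_contra! hnone
    have hsub : G.neighborFinset u ⊆ (Finset.Ioo 0 (G.degree u)).image p.getVert := by
      intro w hw
      rw [mem_neighborFinset] at hw
      obtain ⟨i, rfl, hile⟩ := Walk.mem_support_iff_exists_getVert.1 (hsupp w hw)
      have hpos : i ≠ 0 := by rintro rfl; simp at hw
      have hlt : i < G.degree u := lt_of_not_ge fun h => hnone i hile h hw
      exact Finset.mem_image_of_mem _ (Finset.mem_Ioo.2 ⟨Nat.pos_of_ne_zero hpos, hlt⟩)
    have hcard := (Finset.card_le_card hsub).trans Finset.card_image_le
    rw [card_neighborFinset_eq_degree, Nat.card_Ioo] at hcard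
    omega
  have hpath : HasPathIn G Set.univ u (p.getVert i) i :=
    ⟨p.take i, hp.take i, by simpa using hile, fun _ _ => Set.mem_univ _⟩
  exact ⟨i + 1, by omega, hpath.hasCycleLen (by omega) hadj.symm⟩

lemma exists_isPath_in_forall_adj_mem_support [Finite V] (hs : s.Nonempty) :
    ∃ (u v : V) (p : G.Walk u v), p.IsPath ∧ (∀ w ∈ p.support, w ∈ s) ∧
      (∀ w ∈ s, G.Adj u w → w ∈ p.support) ∧ ∀ w ∈ s, G.Adj v w → w ∈ p.support := by
  have := hs.to_subtype
  obtain ⟨u, v, p, hp, hmax⟩ :=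
    Walk.exists_isPath_forall_isPath_length_le_length (G.induce s)
  have hmem : ∀ w : s, w ∈ p.support → (w : V) ∈ (p.map (Embedding.induce s).toHom).support := by
    intro w hw
    rw [Walk.support_map]
    exact List.mem_map_of_mem hw
  refine ⟨u, v, p.map (Embedding.induce s).toHom, hp.map Subtype.val_injective, ?_, ?_, ?_⟩
  · intro w hw
    obtain ⟨w, -, rfl⟩ := List.mem_map.1 (Walk.support_map _ _ ▸ hw)
    exact w.2
  · intro w hws huw
    refine hmem ⟨w, hws⟩ (by_contra fun hw => ?_)
    have hwu : (G.induce s).Adj ⟨w, hws⟩ u := huw.symm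
    have := hmax _ _ (p.cons hwu) (hp.cons hw)
    simp at this
  · intro w hws hvw
    refine hmem ⟨w, hws⟩ (by_contra fun hw => ?_)
    have hvw' : (G.induce s).Adj v ⟨w, hws⟩ := hvw
    have := hmax _ _ (p.concat hvw') (hp.concat hw hvw')
    simp at this

end Paths

section CyclicSequences

lemma HasCycleLen.exists_isCyclicSeq {c : ℕ} (h : HasCycleLen G c) :
    ∃ F : ZMod c → V, IsCyclicSeq G F := by
  obtain ⟨v, w, hw, rfl⟩ := h
  have hlen := hw.three_le_length
  have : NeZero w.length := ⟨by omega⟩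
  have : Fact (1 < w.length) := ⟨by omega⟩
  refine ⟨fun z => w.getVert z.val, fun x y hxy => ?_, fun z => ?_⟩
  · have hx := x.val_lt
    have hy := y.val_lt
    exact ZMod.val_injective _
      (hw.getVert_injOn' (Nat.le_sub_one_of_lt hx) (Nat.le_sub_one_of_lt hy) hxy)
  · have hz := z.val_lt
    have hadj := w.adj_getVert_succ hz
    rcases (show z.val + 1 ≤ w.length from hz).lt_or_eq with hlt | heq
    · rwa [ZMod.val_add_of_lt (by rwa [ZMod.val_one]), ZMod.val_one]
    · have hzero : (z + 1).val = 0 := by rw [ZMod.val_add, ZMod.val_one, heq, Nat.mod_self]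
      rw [heq, Walk.getVert_length] at hadj
      simpa only [hzero, Walk.getVert_zero] using hadj

lemma HasCycleLen.map {W : Type} {H : SimpleGraph W} {c : ℕ} (h : HasCycleLen H c) (f : H ↪g G) :
    HasCycleLen G c := by
  obtain ⟨v, w, hw, rfl⟩ := h
  exact ⟨f v, w.map f.toHom, hw.map f.injective, w.length_map _⟩

variable {c : ℕ} {F : ZMod c → V}

lemma natCast_injOn_zmod {a : ℕ} : Set.InjOn ((↑) : ℕ → ZMod c) (Set.Ico a (a + c)) := by
  intro i hi j hj hij
  rw [Set.mem_Ico] at hi hj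
  exact ((ZMod.natCast_eq_natCast_iff i j c).1 hij).eq_of_abs_lt (by rw [abs_lt]; omega)

lemma IsCyclicSeq.injOn_rotate (hF : IsCyclicSeq G F) (z : ZMod c) (a : ℕ) :
    Set.InjOn (fun i : ℕ => F (z + i)) (Set.Ico a (a + c)) :=
  fun _ hi _ hj hij => natCast_injOn_zmod hi hj (add_left_cancel (hF.injective hij))

lemma IsCyclicSeq.hasPathIn_arc (hF : IsCyclicSeq G F) (z : ZMod c) {a b : ℕ} (hab : a ≤ b)
    (hb : b < a + c) :
    HasPathIn G ((fun i : ℕ => F (z + i)) '' Set.Icc a b) (F (z + a)) (F (z + b)) (b - a) :=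
  hasPathIn_image_Icc (f := fun i : ℕ => F (z + i)) hab
    ((hF.injOn_rotate z a).mono fun _ hi => Set.mem_Ico.2 ⟨hi.1, hi.2.trans_lt hb⟩)
    fun i => by simpa [add_assoc] using hF.adj_add_one (z + i)

lemma IsCyclicSeq.hasCycleLen (hF : IsCyclicSeq G F) (hc : 3 ≤ c) : HasCycleLen G c := by
  have hpath := hF.hasPathIn_arc 0 (Nat.zero_le (c - 1)) (by omega)
  have hadj := hF.adj_add_one ((c - 1 : ℕ) : ZMod c)
  rw [← Nat.cast_add_one, Nat.sub_add_cancel (by omega), ZMod.natCast_self] at hadj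
  have := hpath.hasCycleLen (by omega) (by simpa using hadj)
  rwa [Nat.sub_zero, Nat.sub_add_cancel (by omega)] at this

end CyclicSequences

section BondyChords

variable {c : ℕ} {F : ZMod c → V}

lemma IsCyclicSeq.disjoint_arcs (hF : IsCyclicSeq G F) (z : ZMod c) {a b a' b' : ℕ}
    (hba' : b < a') (hb' : b' < a + c) :
    Disjoint ((fun i : ℕ => F (z + i)) '' Set.Icc a b)
      ((fun i : ℕ => F (z + i)) '' Set.Icc a' b') := by
  rw [Set.disjoint_left]
  rintro _ ⟨i, hi, rfl⟩ ⟨j, hj, hij⟩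
  rw [Set.mem_Icc] at hi hj
  have := hF.injOn_rotate z a (Set.mem_Ico.2 ⟨by omega, by omega⟩)
    (Set.mem_Ico.2 ⟨by omega, by omega⟩) hij
  omega

lemma IsCyclicSeq.hasCycleLen_of_parallel_chords (hF : IsCyclicSeq G F) {z : ZMod c} {k j : ℕ}
    (hk : 2 ≤ k) (hkj : k ≤ j) (hj : j < c) (h1k : G.Adj (F (z + 1)) (F (z + k)))
    (h0j : G.Adj (F z) (F (z + j))) : HasCycleLen G (j - k + 3) := by
  have hedge := hF.hasPathIn_arc z zero_le_one (by omega)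
  have harc := hF.hasPathIn_arc z hkj (by omega)
  have hdisj := hF.disjoint_arcs z hk (by omega : j < 0 + c)
  convert hedge.hasCycleLen_of_disjoint harc hdisj (by simpa using h1k) (by simpa using h0j.symm)
    (by omega) using 1
  omega

lemma IsCyclicSeq.hasCycleLen_of_crossing_chords (hF : IsCyclicSeq G F) {z : ZMod c} {k j : ℕ}
    (hk : 2 ≤ k) (hkj : k < j) (hj : j ≤ c) (h0k : G.Adj (F z) (F (z + k)))
    (h1j : G.Adj (F (z + 1)) (F (z + j))) : HasCycleLen G (k + c - j + 1) := by
  have harc := hF.hasPathIn_arc z (by omega : 1 ≤ k) (by omega)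
  have harc' := (hF.hasPathIn_arc z hj (by omega)).symm
  have hdisj := hF.disjoint_arcs z hkj (by omega : c < 1 + c)
  convert harc.hasCycleLen_of_disjoint harc' hdisj (by simpa using h0k.symm)
    (by simpa using h1j.symm) (by omega) using 1
  omega

/-- The bijection of `{2, …, c - 1}` pairing chords at two consecutive vertices `0`, `1` of a cycle
of length `c`: the chords `{1, k}` and `{0, chordShift c l k}` close up a cycle of length `l`. -/
def chordShift (c l k : ℕ) : ℕ :=
  if k + l < c + 3 then k + l - 3 else k + l - (c + 1)

lemma chordShift_mem_Ico {l k : ℕ} (hl : 3 ≤ l) (hlc : l < c) (hk : k ∈ Finset.Ico 2 c) :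
    chordShift c l k ∈ Finset.Ico 2 c := by
  simp only [chordShift, Finset.mem_Ico] at hk ⊢
  split_ifs <;> omega

lemma chordShift_injOn {l : ℕ} (hl : 3 ≤ l) : Set.InjOn (chordShift c l) (Finset.Ico 2 c) := by
  intro i hi j hj hij
  simp only [chordShift, Finset.coe_Ico, Set.mem_Ico] at hi hj hij
  split_ifs at hij <;> omega

lemma IsCyclicSeq.hasCycleLen_of_adj_chordShift (hF : IsCyclicSeq G F) {z : ZMod c} {k l : ℕ}
    (hl : 3 ≤ l) (hlc : l < c) (hk : k ∈ Finset.Ico 2 c) (h1 : G.Adj (F (z + 1)) (F (z + k)))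
    (h0 : G.Adj (F z) (F (z + chordShift c l k))) : HasCycleLen G l := by
  rw [Finset.mem_Ico] at hk
  unfold chordShift at h0
  split_ifs at h0 with hkl
  · convert hF.hasCycleLen_of_parallel_chords hk.1 (by omega) (by omega) h1 h0 using 1
    omega
  · convert hF.hasCycleLen_of_crossing_chords (by omega) (by omega) hk.2.le h0 h1 using 1
    omega

variable [Fintype V] [DecidableRel G.Adj]

lemma degree_le_card_chords_add_one [NeZero c] (hsurj : Function.Surjective F) (z : ZMod c)
    {x : ℕ} (hx : x ≤ 1) :
    G.degree (F (z + x)) ≤ #{i ∈ Finset.Ico 2 c | G.Adj (F (z + x)) (F (z + (i : ℕ)))} + 1 := by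
  classical
  have hsub : G.neighborFinset (F (z + x)) ⊆ insert (F (z + (1 - x : ℕ)))
      (({i ∈ Finset.Ico 2 c | G.Adj (F (z + x)) (F (z + (i : ℕ)))} : Finset ℕ).image
        fun i : ℕ => F (z + i)) := by
    intro w hw
    obtain ⟨y, rfl⟩ := hsurj w
    obtain ⟨i, hi, rfl⟩ : ∃ i < c, z + (i : ℕ) = y := ⟨(y - z).val, ZMod.val_lt _, by simp⟩
    rw [mem_neighborFinset] at hw
    have hix : i ≠ x := by rintro rfl; exact hw.ne rfl
    rw [Finset.mem_insert, or_iff_not_imp_left]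
    refine fun hne => Finset.mem_image_of_mem _
      (Finset.mem_filter.2 ⟨Finset.mem_Ico.2 ⟨?_, hi⟩, hw⟩)
    by_contra! hi2
    exact hne (by rw [show i = 1 - x by omega])
  rw [← card_neighborFinset_eq_degree]
  exact (Finset.card_le_card hsub).trans ((Finset.card_insert_le _ _).trans
    (Nat.add_le_add_right Finset.card_image_le 1))

lemma IsCyclicSeq.hasCycleLen_of_lt_degree_add_degree (hF : IsCyclicSeq G F)
    (hsurj : Function.Surjective F) {z : ZMod c} (hdeg : c < G.degree (F z) + G.degree (F (z + 1)))
    {l : ℕ} (hl : 3 ≤ l) (hlc : l < c) : HasCycleLen G l := by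
  have : NeZero c := ⟨by omega⟩
  have hdeg0 := degree_le_card_chords_add_one (G := G) hsurj z (x := 0) (by omega)
  have hdeg1 := degree_le_card_chords_add_one (G := G) hsurj z (x := 1) le_rfl
  rw [Nat.cast_zero, add_zero] at hdeg0
  rw [Nat.cast_one] at hdeg1
  set A : Finset ℕ := {i ∈ Finset.Ico 2 c | G.Adj (F (z + 1)) (F (z + (i : ℕ)))}
  set B : Finset ℕ := {i ∈ Finset.Ico 2 c | G.Adj (F z) (F (z + (i : ℕ)))}
  have hA : A ⊆ Finset.Ico 2 c := Finset.filter_subset _ _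
  have hshift : A.image (chordShift c l) ⊆ Finset.Ico 2 c :=
    Finset.image_subset_iff.2 fun i hi => chordShift_mem_Ico hl hlc (hA hi)
  have hcard : #(A.image (chordShift c l)) = #A :=
    Finset.card_image_of_injOn ((chordShift_injOn hl).mono (Finset.coe_subset.2 hA))
  have hinter : (A.image (chordShift c l) ∩ B).Nonempty := by
    refine Finset.inter_nonempty_of_card_lt_card_add_card hshift (Finset.filter_subset _ _) ?_
    rw [hcard, Nat.card_Ico]
    omega
  obtain ⟨_, hj⟩ := hinter
  obtain ⟨⟨i, hi, rfl⟩, hB⟩ := (Finset.mem_inter.1 hj).imp_left Finset.mem_image.1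
  exact hF.hasCycleLen_of_adj_chordShift hl hlc (hA hi) (Finset.mem_filter.1 hi).2
    (Finset.mem_filter.1 hB).2

lemma IsCyclicSeq.hasCycleLen_of_surjective (hF : IsCyclicSeq G F)
    (hsurj : Function.Surjective F) (hedge : Fintype.card V ^ 2 < 4 * #G.edgeFinset)
    {l : ℕ} (hl : 3 ≤ l) (hlc : l < c) : HasCycleLen G l := by
  have : NeZero c := ⟨by omega⟩
  have hcard : Fintype.card V = c := by
    rw [← Fintype.card_of_bijective ⟨hF.injective, hsurj⟩, ZMod.card]
  have hsum : ∑ z, G.degree (F z) = 2 * #G.edgeFinset := by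
    rw [← G.sum_degrees_eq_twice_card_edges]
    exact Function.Bijective.sum_comp ⟨hF.injective, hsurj⟩ fun v => G.degree v
  have hsum1 : ∑ z, G.degree (F (z + 1)) = 2 * #G.edgeFinset := by
    rw [← hsum]
    exact Equiv.sum_comp (Equiv.addRight (1 : ZMod c)) fun z => G.degree (F z)
  obtain ⟨z, -, hz⟩ : ∃ z ∈ Finset.univ, c < G.degree (F z) + G.degree (F (z + 1)) := by
    apply Finset.exists_lt_of_sum_lt
    rw [Finset.sum_add_distrib, hsum, hsum1, Finset.sum_const, Finset.card_univ, ZMod.card,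
      smul_eq_mul, ← sq, ← hcard]
    omega
  exact hF.hasCycleLen_of_lt_degree_add_degree hsurj hz hl hlc

end BondyChords

section LongestCycle

variable {c : ℕ} {F : ZMod c → V}

lemma exists_minimal_gap [NeZero c] {A B : Finset (ZMod c)} (hA : A.Nonempty) (hB : B.Nonempty) :
    ∃ j : ℕ, 1 ≤ j ∧ j ≤ c ∧ (∃ z ∈ A, z + j ∈ B) ∧ ∀ i < j, 1 ≤ i → ∀ z ∈ A, z + i ∉ B := by
  classical
  obtain ⟨z, hz⟩ := hA
  obtain ⟨w, hw⟩ := hB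
  have hwrap : 1 ≤ (w - z - 1).val + 1 ∧ ∃ y ∈ A, y + (((w - z - 1).val + 1 : ℕ) : ZMod c) ∈ B :=
    ⟨by omega, z, hz, by simpa using hw⟩
  have hex : ∃ j : ℕ, 1 ≤ j ∧ ∃ y ∈ A, y + (j : ZMod c) ∈ B := ⟨_, hwrap⟩
  obtain ⟨hj, hjB⟩ := Nat.find_spec hex
  refine ⟨Nat.find hex, hj, (Nat.find_min' hex hwrap).trans (ZMod.val_lt _), hjB, ?_⟩
  exact fun i hi hi1 y hy hyB => Nat.find_min hex hi ⟨hi1, y, hy, hyB⟩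

lemma card_add_card_add_le_of_gap [NeZero c] {A B : Finset (ZMod c)} (hA : A.Nonempty)
    (hB : B.Nonempty) {m : ℕ}
    (hgap : ∀ z ∈ A, ∀ j : ℕ, 1 ≤ j → j ≤ c → z + j ∈ B → m + 1 < j) : #A + #B + m ≤ c := by
  classical
  obtain ⟨j, hj, hjc, ⟨z, hz, hzj⟩, hmin⟩ := exists_minimal_gap hA hB
  have hmj := hgap z hz j hj hjc hzj
  -- The `m` positions following `z + 1` lie strictly inside a shortest gap from `A` to `B`,
  -- so they avoid both `B` and `A + 1`.
  set S := (Finset.Ico 2 (m + 2)).image fun i : ℕ => z + (i : ZMod c) with hS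
  have hAB : Disjoint (A.image (· + 1)) B := by
    refine Finset.disjoint_left.2 fun w hwA hwB => ?_
    obtain ⟨y, hy, rfl⟩ := Finset.mem_image.1 hwA
    have := hgap y hy 1 le_rfl (hj.trans hjc) (by simpa using hwB)
    exact hmin 1 (by omega) le_rfl y hy (by simpa using hwB)
  have hABS : Disjoint (A.image (· + 1) ∪ B) S := by
    refine Finset.disjoint_right.2 fun w hw => ?_
    obtain ⟨i, hi, rfl⟩ := Finset.mem_image.1 hw
    rw [Finset.mem_Ico] at hi
    rw [Finset.mem_union, not_or]
    refine ⟨fun hiA => ?_, hmin i (by omega) (by omega) z hz⟩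
    obtain ⟨y, hy, hyi⟩ := Finset.mem_image.1 hiA
    have hyj : y + ((j + 1 - i : ℕ) : ZMod c) = z + j := by
      rw [eq_sub_of_add_eq hyi, Nat.cast_sub (by omega), Nat.cast_add_one]
      ring
    exact hmin (j + 1 - i) (by omega) (by omega) y hy (hyj ▸ hzj)
  have hScard : #S = m := by
    rw [hS, Finset.card_image_of_injOn, Nat.card_Ico, Nat.add_sub_cancel]
    refine fun a ha b hb hab => natCast_injOn_zmod (a := 2) ?_ ?_ (add_left_cancel hab)
    all_goals simp only [Finset.coe_Ico, Set.mem_Ico] at ha hb ⊢; omega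
  have hle := Finset.card_le_univ (A.image (· + 1) ∪ B ∪ S)
  rwa [Finset.card_union_of_disjoint hABS, Finset.card_union_of_disjoint hAB, hScard,
    Finset.card_image_of_injective _ (add_left_injective 1), ZMod.card] at hle

lemma IsCyclicSeq.hasCycleLen_of_ear (hF : IsCyclicSeq G F) {u v : V} {m j : ℕ} {z : ZMod c}
    (hp : HasPathIn G (Set.range F)ᶜ u v m) (hu : G.Adj u (F z)) (hv : G.Adj v (F (z + j)))
    (hj : 1 ≤ j) (hjc : j ≤ c) (hlen : 1 ≤ m + (c - j)) : HasCycleLen G (m + (c - j) + 2) := by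
  refine hp.hasCycleLen_of_disjoint (hF.hasPathIn_arc z hjc (by omega)) ?_ hv
    (by simpa using hu.symm) hlen
  refine Set.disjoint_left.2 ?_
  rintro _ hx ⟨i, -, rfl⟩
  exact hx ⟨z + i, rfl⟩

lemma IsCyclicSeq.length_add_lt_card [Fintype V] [NeZero c] (hF : IsCyclicSeq G F) {u v : V}
    {p : G.Walk u v} (hp : p.IsPath) (hpF : ∀ w ∈ p.support, w ∉ Set.range F) :
    p.length + c < Fintype.card V := by
  classical
  have hdisj : Disjoint p.support.toFinset (Finset.univ.image F) := by
    rw [Finset.disjoint_left]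
    intro w hw hwF
    exact hpF w (List.mem_toFinset.1 hw) (by simpa using hwF)
  have hle := Finset.card_le_univ (p.support.toFinset ∪ Finset.univ.image F)
  rw [Finset.card_union_of_disjoint hdisj, List.toFinset_card_of_nodup hp.support_nodup,
    Walk.length_support, Finset.card_image_of_injective _ hF.injective, Finset.card_univ,
    ZMod.card] at hle
  omega

variable [Fintype V] [DecidableRel G.Adj]

lemma degree_le_length_add_card_adj [NeZero c] {a b u : V} {p : G.Walk a b} (hu : u ∈ p.support)
    (hsupp : ∀ w ∉ Set.range F, G.Adj u w → w ∈ p.support) :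
    G.degree u ≤ p.length + #{z | G.Adj u (F z)} := by
  classical
  have hsub : G.neighborFinset u ⊆
      p.support.toFinset.erase u ∪ ({z | G.Adj u (F z)} : Finset (ZMod c)).image F := by
    intro w hw
    rw [mem_neighborFinset] at hw
    by_cases hwF : w ∈ Set.range F
    · obtain ⟨z, rfl⟩ := hwF
      exact Finset.mem_union_right _ (Finset.mem_image_of_mem F (by simpa using hw))
    · exact Finset.mem_union_left _
        (Finset.mem_erase.2 ⟨hw.ne', List.mem_toFinset.2 (hsupp w hwF hw)⟩)
  have hsupport : #(p.support.toFinset.erase u) ≤ p.length := by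
    have := p.support.toFinset_card_le
    rw [Walk.length_support] at this
    rw [Finset.card_erase_of_mem (List.mem_toFinset.2 hu)]
    omega
  rw [← card_neighborFinset_eq_degree]
  exact (Finset.card_le_card hsub).trans ((Finset.card_union_le _ _).trans
    (add_le_add hsupport Finset.card_image_le))

lemma IsCyclicSeq.exists_adj_of_card_le_two_mul_degree (hF : IsCyclicSeq G F) (hc : 3 ≤ c)
    (hmax : ∀ l, HasCycleLen G l → l ≤ c) {u v : V} {p : G.Walk u v} (hp : p.IsPath)
    (hpF : ∀ w ∈ p.support, w ∉ Set.range F)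
    (hsupp : ∀ w ∉ Set.range F, G.Adj u w → w ∈ p.support)
    (hdeg : Fintype.card V ≤ 2 * G.degree u) : ∃ z, G.Adj u (F z) := by
  have : NeZero c := ⟨by omega⟩
  by_contra! hnone
  have hcard := hF.length_add_lt_card hp hpF
  have hdegree : G.degree u ≤ p.length := by
    simpa [hnone] using degree_le_length_add_card_adj p.start_mem_support hsupp
  obtain ⟨l, hl, hcycle⟩ := exists_hasCycleLen_gt_degree hp
    (fun w huw => hsupp w (by rintro ⟨z, rfl⟩; exact hnone z huw) huw) (by omega)
  have := hmax l hcycle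
  omega

lemma IsCyclicSeq.surjective_of_card_le_two_mul_degree (hF : IsCyclicSeq G F) (hc : 3 ≤ c)
    (hmax : ∀ l, HasCycleLen G l → l ≤ c)
    (hdeg : ∀ v ∉ Set.range F, Fintype.card V ≤ 2 * G.degree v) : Function.Surjective F := by
  have : NeZero c := ⟨by omega⟩
  by_contra hsurj
  obtain ⟨u, v, p, hp, hpF, hu, hv⟩ := exists_isPath_in_forall_adj_mem_support (G := G)
    (Set.nonempty_compl.2 (mt Set.range_eq_univ.1 hsurj))
  have hdegu := hdeg u (hpF u p.start_mem_support)
  have hdegv := hdeg v (hpF v p.end_mem_support)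
  obtain ⟨a, ha⟩ := hF.exists_adj_of_card_le_two_mul_degree hc hmax hp hpF hu hdegu
  obtain ⟨b, hb⟩ := hF.exists_adj_of_card_le_two_mul_degree hc hmax hp.reverse
    (by simpa using hpF) (by simpa using hv) hdegv
  have hgap : #{z | G.Adj u (F z)} + #{z | G.Adj v (F z)} + p.length ≤ c := by
    refine card_add_card_add_le_of_gap ⟨a, by simpa using ha⟩ ⟨b, by simpa using hb⟩ ?_
    intro z hz j hj hjc hzj
    by_contra! hjm
    have := hmax _ (hF.hasCycleLen_of_ear ⟨p, hp, rfl, hpF⟩ (Finset.mem_filter.1 hz).2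
      (Finset.mem_filter.1 hzj).2 hj hjc (by omega))
    omega
  have := degree_le_length_add_card_adj p.start_mem_support hu
  have := degree_le_length_add_card_adj p.end_mem_support hv
  have := hF.length_add_lt_card hp hpF
  omega

end LongestCycle

lemma edgeCount_eq_card_edgeFinset [Fintype G.edgeSet] : edgeCount G = #G.edgeFinset := by
  rw [edgeCount, Nat.card_eq_fintype_card, edgeFinset_card]

lemma edgeCount_induce_compl_singleton_add_degree [Fintype V] [DecidableRel G.Adj] (v : V) :
    edgeCount (G.induce {v}ᶜ) + G.degree v = edgeCount G := by
  classical
  have hle : G.degree v ≤ #G.edgeFinset := by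
    rw [← card_incidenceFinset_eq_degree]
    exact Finset.card_le_card (G.incidenceFinset_subset v)
  rw [edgeCount_eq_card_edgeFinset, edgeCount_eq_card_edgeFinset,
    card_edgeFinset_induce_compl_singleton, card_edgeFinset_deleteIncidenceSet,
    Nat.sub_add_cancel hle]

lemma natCard_compl_singleton_add_one [Finite V] (v : V) :
    Nat.card ({v}ᶜ : Set V) + 1 = Nat.card V := by
  simpa [add_comm] using Set.ncard_add_ncard_compl {v}

lemma sq_card_lt_four_mul_edgeCount_induce [Fintype V] [DecidableRel G.Adj] {v : V}
    (hedge : Nat.card V ^ 2 < 4 * edgeCount G) (hdeg : 2 * G.degree v < Nat.card V) :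
    Nat.card ({v}ᶜ : Set V) ^ 2 < 4 * edgeCount (G.induce {v}ᶜ) := by
  have hcard := natCard_compl_singleton_add_one v
  have := edgeCount_induce_compl_singleton_add_degree (G := G) v
  nlinarith

lemma IsCyclicSeq.hasCycleLen_induce {c : ℕ} {F : ZMod c → V} (hF : IsCyclicSeq G F) (hc : 3 ≤ c)
    {s : Set V} (hs : ∀ z, F z ∈ s) : HasCycleLen (G.induce s) c :=
  IsCyclicSeq.hasCycleLen (F := fun z => ⟨F z, hs z⟩)
    ⟨fun _ _ h => hF.injective (Subtype.ext_iff.1 h), hF.adj_add_one⟩ hc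

lemma HasCycleLen.of_le_of_longest {V : Type} [Finite V] {G : SimpleGraph V} {c l : ℕ}
    (hcycle : HasCycleLen G c) (hmax : ∀ l, HasCycleLen G l → l ≤ c)
    (hedge : Nat.card V ^ 2 < 4 * edgeCount G) (hl : 3 ≤ l) (hlc : l ≤ c) : HasCycleLen G l := by
  classical
  induction hn : Nat.card V using Nat.strong_induction_on generalizing V with
  | h n ih =>
    have := Fintype.ofFinite V
    obtain ⟨F, hF⟩ := hcycle.exists_isCyclicSeq
    by_cases hlow : ∃ v ∉ Set.range F, 2 * G.degree v < Nat.card V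
    · obtain ⟨v, hv, hdeg⟩ := hlow
      have hcycle' : HasCycleLen (G.induce {v}ᶜ) c :=
        hF.hasCycleLen_induce (hl.trans hlc) fun z hz => hv ⟨z, hz⟩
      have hcard := natCard_compl_singleton_add_one v
      exact (ih _ (by omega) hcycle' (fun l hl => hmax l (hl.map (Embedding.induce _)))
        (sq_card_lt_four_mul_edgeCount_induce hedge hdeg) rfl).map (Embedding.induce _)
    · push Not at hlow
      rw [Nat.card_eq_fintype_card] at hlow hedge
      rw [edgeCount_eq_card_edgeFinset] at hedge
      have hsurj := hF.surjective_of_card_le_two_mul_degree (hl.trans hlc) hmax hlow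
      rcases hlc.eq_or_lt with rfl | hlt
      · exact hcycle
      · exact hF.hasCycleLen_of_surjective hsurj hedge hl hlt

lemma hasCycleLen_three_of_sq_card_lt [Finite V] (hedge : Nat.card V ^ 2 < 4 * edgeCount G) :
    HasCycleLen G 3 := by
  classical
  have := Fintype.ofFinite V
  rw [edgeCount_eq_card_edgeFinset, Nat.card_eq_fintype_card] at hedge
  refine is3Clique_iff_exists_cycle_length_three.1 ?_
  by_contra! hfree
  have hturan := CliqueFree.card_edgeFinset_le (r := 2) hfree
  dsimp only at hturan
  rw [Nat.choose_eq_zero_of_lt (Nat.mod_lt _ two_pos)] at hturan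
  omega

lemma bddAbove_setOf_hasCycleLen [Finite V] : BddAbove {l | HasCycleLen G l} := by
  refine ⟨Nat.card V, fun l hl => ?_⟩
  obtain ⟨F, hF⟩ := HasCycleLen.exists_isCyclicSeq hl
  simpa using Nat.card_le_card_of_injective F hF.injective

lemma HasCycleLen.le_circumference [Finite V] {l : ℕ} (h : HasCycleLen G l) :
    l ≤ circumference G :=
  le_csSup bddAbove_setOf_hasCycleLen h

lemma hasCycleLen_circumference [Finite V] {l : ℕ} (h : HasCycleLen G l) :
    HasCycleLen G (circumference G) :=
  Nat.sSup_mem ⟨l, h⟩ bddAbove_setOf_hasCycleLen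

lemma sq_lt_four_mul_choose_two_add_choose_two {k n : ℕ} (hn : 2 * k + 5 ≤ n) :
    n ^ 2 < 4 * ((n - k - 1).choose 2 + (k + 2).choose 2) := by
  obtain ⟨d, rfl⟩ := Nat.exists_eq_add_of_le hn
  have ha := Nat.add_one_mul_choose_eq (k + d + 3) 1
  have hb := Nat.add_one_mul_choose_eq (k + 1) 1
  rw [Nat.choose_one_right] at ha hb
  rw [show 2 * k + 5 + d - k - 1 = k + d + 3 + 1 by omega]
  nlinarith

theorem weakly_pancyclic_of_many_edges_general [Finite V]
    (hedge : Nat.card V ^ 2 < 4 * edgeCount G) : WeaklyPancyclic3 G := by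
  have htriangle := hasCycleLen_three_of_sq_card_lt hedge
  refine ⟨htriangle, fun l hl hlc => ?_⟩
  exact (hasCycleLen_circumference htriangle).of_le_of_longest (fun _ h => h.le_circumference)
    hedge hl hlc

end

/-- Weak pancyclicity part of Theorem 2.1. -/
theorem weakly_pancyclic_of_many_edges (k n : ℕ) (G : SimpleGraph (Fin n))
    (hn : 2 * k + 5 ≤ n)
    (he : (n - k - 1).choose 2 + (k + 2).choose 2 ≤ edgeCount G) :
    WeaklyPancyclic3 G := by
  refine weakly_pancyclic_of_many_edges_general ?_
  rw [Nat.card_fin]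
  exact (sq_lt_four_mul_choose_two_add_choose_two hn).trans_le (Nat.mul_le_mul_left 4 he)
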